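/- Let T > 0 and let constants 0 < c₂ < c₃ and L > 0 be given. Let F̲, F̄ : [0,T] × ℝ → ℝ satisfy F̲ ≤ F̄ pointwise, with t ↦ F̄(t,y) and t ↦ F̲(t,y) Lebesgue measurable for each y, both F̄(t,·) and F̲(t,·) L-Lipschitz on [0, c₃] for every t, and sup over t ∈ [0,T] and y ∈ [0, c₃] of |F̄(t,y)| + |F̲(t,y)| finite. Let h̲ ≤ h̄ be real numbers with 0 ≤ h̲ and h̄ ≤ c₂. Suppose F̲(t, 0) ≥ 0 for all t, and ε > 0 satisfies F̄(t, c₃) ≤ ε for all t and ε(e^{LT} − 1)/L ≤ c₃ − c₂. Then the two dominating backward ODEs ȳ(t) = h̄ + ∫_t^T F̄(s, ȳ(s)) ds and y̲(t) = h̲ + ∫_t^T F̲(s, y̲(s)) ds admit continuous solutions ȳ, y̲ on [0,T] with 0 ≤ y̲(t) ≤ ȳ(t) ≤ c₃ for all t ∈ [0,T]. -/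

import Mathlib

open MeasureTheory Set

/-!
Extend both generators from `[0, c₃]` to globally Lipschitz ones by clamping the state variable.
Since the generators are merely measurable in time, the extended equations are solved in integral
form: the Picard map is of Volterra type, so its `n`-th iterate is `(LT)ⁿ/n!`-Lipschitz. The same
iteration applied to the positive part of a difference of solutions gives the comparison principle.
Comparing with the constant `0` and with `w t = c₃ - ε (e^{Lt} - 1) / L`, which solves
`-w' = ε + L (c₃ - w)` and satisfies `w 0 = c₃` and `w T ≥ c₂`, confines the solutions to
`[0, c₃]`, where the extended generators agree with the given ones.
-/

open Filter Function
open scoped Interval NNReal Nat Topology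

section VolterraIteration

theorem mul_integral_pow_div_factorial (K t b : ℝ) (n : ℕ) :
    K * ∫ s in t..b, (K * (b - s)) ^ n / n ! = (K * (b - t)) ^ (n + 1) / (n + 1)! := by
  have hint : ∫ s in t..b, (b - s) ^ n = (b - t) ^ (n + 1) / (n + 1) := by
    simp [intervalIntegral.integral_comp_sub_left fun x : ℝ => x ^ n]
  simp only [mul_pow, mul_div_right_comm]
  rw [intervalIntegral.integral_const_mul, hint, Nat.factorial_succ]
  push_cast
  field_simp
  ring

variable {a b : ℝ} {K : ℝ≥0}

theorem le_mul_pow_div_factorial_of_le_mul_integral {u : ℕ → ℝ → ℝ} {C : ℝ}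
    (hu : ∀ n, IntervalIntegrable (u n) volume a b) (hu_zero : ∀ t ∈ Icc a b, u 0 t ≤ C)
    (hu_succ : ∀ n, ∀ t ∈ Icc a b, u (n + 1) t ≤ K * ∫ s in t..b, u n s) (n : ℕ) :
    ∀ t ∈ Icc a b, u n t ≤ C * ((K * (b - t)) ^ n / n !) := by
  induction n with
  | zero => simpa using hu_zero
  | succ n ih =>
    intro t ht
    have hsub : uIcc t b ⊆ uIcc a b := uIcc_subset_uIcc_right (Icc_subset_uIcc ht)
    calc u (n + 1) t ≤ K * ∫ s in t..b, u n s := hu_succ n t ht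
      _ ≤ K * ∫ s in t..b, C * ((K * (b - s)) ^ n / n !) := by
        gcongr
        exact intervalIntegral.integral_mono_on ht.2 ((hu n).mono_set hsub)
          (Continuous.intervalIntegrable (by fun_prop) _ _)
          fun s hs => ih s ⟨ht.1.trans hs.1, hs.2⟩
      _ = C * ((K * (b - t)) ^ (n + 1) / (n + 1)!) := by
        rw [intervalIntegral.integral_const_mul, mul_left_comm, mul_integral_pow_div_factorial]

theorem nonpos_of_le_mul_integral {u : ℝ → ℝ} (hu : ContinuousOn u (Icc a b))
    (hle : ∀ t ∈ Icc a b, u t ≤ K * ∫ s in t..b, u s) : ∀ t ∈ Icc a b, u t ≤ 0 := by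
  intro t ht
  have hab : a ≤ b := ht.1.trans ht.2
  obtain ⟨C, hC⟩ := isCompact_Icc.bddAbove_image hu
  have hbound (n : ℕ) : u t ≤ C * ((K * (b - t)) ^ n / n !) :=
    le_mul_pow_div_factorial_of_le_mul_integral (u := fun _ => u)
      (fun _ => hu.intervalIntegrable_of_Icc hab) (fun s hs => hC (mem_image_of_mem u hs))
      (fun _ => hle) n t ht
  have hlim : Tendsto (fun n : ℕ => C * ((K * (b - t)) ^ n / n !)) atTop (𝓝 0) := by
    simpa using (FloorSemiring.tendsto_pow_div_factorial_atTop (K * (b - t))).const_mul C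
  exact ge_of_tendsto' hlim hbound

theorem exists_isFixedPt_of_dist_le_mul_integral {X : Type*} [MetricSpace X] [CompleteSpace X]
    [Nonempty X] (hab : a ≤ b) {Φ : C(Icc a b, X) → C(Icc a b, X)}
    (hΦ : ∀ y z (t : Icc a b), dist (Φ y t) (Φ z t) ≤
      K * ∫ s in t..b, dist (IccExtend hab y s) (IccExtend hab z s)) :
    ∃ y, IsFixedPt Φ y := by
  have hdist (y z : C(Icc a b, X)) :
      Continuous fun s => dist (IccExtend hab y s) (IccExtend hab z s) :=
    y.continuous.Icc_extend'.dist z.continuous.Icc_extend'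
  have hiterate (y z : C(Icc a b, X)) (n : ℕ) (t : Icc a b) :
      dist (Φ^[n] y t) (Φ^[n] z t) ≤ dist y z * ((K * (b - t)) ^ n / n !) := by
    have h := le_mul_pow_div_factorial_of_le_mul_integral (K := K)
      (u := fun n s => dist (IccExtend hab (Φ^[n] y) s) (IccExtend hab (Φ^[n] z) s))
      (fun n => (hdist _ _).intervalIntegrable a b)
      (fun s _ => ContinuousMap.dist_apply_le_dist _)
      (fun n s hs => by
        simpa only [iterate_succ_apply', IccExtend_of_mem hab _ hs]
          using hΦ (Φ^[n] y) (Φ^[n] z) ⟨s, hs⟩) n t t.2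
    simpa only [IccExtend_val, iterate_zero_apply] using h
  obtain ⟨n, hn⟩ : ∃ n : ℕ, ((K : ℝ) * (b - a)) ^ n / n ! < 1 :=
    ((FloorSemiring.tendsto_pow_div_factorial_atTop _).eventually_lt_const one_pos).exists
  have : 0 ≤ b - a := sub_nonneg.2 hab
  have : Nonempty C(Icc a b, X) := ‹Nonempty X›.map (ContinuousMap.const _)
  have hcontracting : ContractingWith (((K : ℝ) * (b - a)) ^ n / n !).toNNReal Φ^[n] := by
    refine ⟨Real.toNNReal_lt_one.2 hn, LipschitzWith.of_dist_le_mul fun y z => ?_⟩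
    rw [Real.coe_toNNReal _ (by positivity), ContinuousMap.dist_le (by positivity)]
    intro t
    have hbt : 0 ≤ b - t := sub_nonneg.2 t.2.2
    calc dist (Φ^[n] y t) (Φ^[n] z t) ≤ dist y z * ((K * (b - t)) ^ n / n !) := hiterate y z n t
      _ ≤ dist y z * ((K * (b - a)) ^ n / n !) := by gcongr; exact t.2.1
      _ = (K * (b - a)) ^ n / n ! * dist y z := mul_comm _ _
  exact ⟨_, hcontracting.isFixedPt_fixedPoint_iterate⟩

end VolterraIteration

section Composition

theorem aestronglyMeasurable_comp_of_continuous {ι X Y : Type*} [TopologicalSpace ι]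
    [TopologicalSpace.MetrizableSpace ι] [SecondCountableTopology ι] [MeasurableSpace ι]
    [OpensMeasurableSpace ι] [TopologicalSpace X] [TopologicalSpace Y]
    [TopologicalSpace.PseudoMetrizableSpace Y] [Zero Y] {μ : Measure ι} {s : Set ι}
    (hs : MeasurableSet s) {G : ι → X → Y} {y : ι → X}
    (hG_meas : ∀ x, StronglyMeasurable fun t => G t x) (hG_cont : ∀ t ∈ s, Continuous (G t))
    (hy : Continuous y) : AEStronglyMeasurable (fun t => G t (y t)) (μ.restrict s) := by
  -- The continuous parameter is the time `r` along the path, which ranges over the second countable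
  -- space `ι`, rather than the state in `X`.
  have hjoint : StronglyMeasurable (uncurry fun r t => s.indicator (fun t => G t (y r)) t) := by
    refine stronglyMeasurable_uncurry_of_continuous_of_stronglyMeasurable (fun t => ?_)
      fun r => (hG_meas (y r)).indicator hs
    by_cases ht : t ∈ s
    · simpa only [indicator_of_mem ht, comp_def] using (hG_cont t ht).comp hy
    · simpa only [indicator_of_notMem ht] using continuous_const
  refine ⟨_, hjoint.comp_measurable (measurable_id.prodMk measurable_id), ?_⟩
  filter_upwards [ae_restrict_mem hs] with t ht
  simp [uncurry, ht]

theorem intervalIntegrable_comp_of_lipschitzWith {E F : Type*} [SeminormedAddCommGroup E]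
    [NormedAddCommGroup F] {a b : ℝ} {K : ℝ≥0} (hab : a ≤ b) {G : ℝ → E → F} {y : ℝ → E}
    (hG_meas : ∀ x, StronglyMeasurable fun t => G t x)
    (hG_lip : ∀ t ∈ Icc a b, LipschitzWith K (G t))
    (hG_int : IntervalIntegrable (fun t => G t 0) volume a b) (hy : Continuous y) :
    IntervalIntegrable (fun t => G t (y t)) volume a b := by
  have hbound : IntervalIntegrable (fun t => ‖G t 0‖ + K * ‖y t‖) volume a b :=
    hG_int.norm.add (Continuous.intervalIntegrable (by fun_prop) a b)
  have hmem : Ι a b ⊆ Icc a b := uIoc_of_le hab ▸ Ioc_subset_Icc_self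
  refine hbound.mono_fun' ?_ ?_
  · exact aestronglyMeasurable_comp_of_continuous measurableSet_uIoc hG_meas
      (fun t ht => (hG_lip t (hmem ht)).continuous) hy
  · filter_upwards [ae_restrict_mem measurableSet_uIoc] with t ht
    have hdist := (hG_lip t (hmem ht)).norm_sub_le (y t) 0
    rw [sub_zero] at hdist
    linarith [norm_le_norm_add_norm_sub' (G t (y t)) (G t 0)]

end Composition

/-- `y` solves the backward equation `y t = h + ∫ s in t..b, F s (y s)` on `[a, b]`: the terminal
value `h` is prescribed at `b`, and `F` is the generator. Integrability of the integrand is required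
because the Bochner integral of a non-integrable function is `0`. -/
structure IsBackwardSolution {E : Type*} [NormedAddCommGroup E] [NormedSpace ℝ E]
    (F : ℝ → E → E) (a b : ℝ) (h : E) (y : ℝ → E) : Prop where
  continuousOn : ContinuousOn y (Icc a b)
  intervalIntegrable : IntervalIntegrable (fun s => F s (y s)) volume a b
  eq_add_integral : ∀ t ∈ Icc a b, y t = h + ∫ s in t..b, F s (y s)

section Existence

variable {E : Type*} [NormedAddCommGroup E] [NormedSpace ℝ E] {a b : ℝ}

theorem exists_isBackwardSolution [CompleteSpace E] {K : ℝ≥0} {G : ℝ → E → E} (hab : a ≤ b)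
    (hG_meas : ∀ x, StronglyMeasurable fun t => G t x)
    (hG_lip : ∀ t ∈ Icc a b, LipschitzWith K (G t))
    (hG_int : IntervalIntegrable (fun t => G t 0) volume a b) (h : E) :
    ∃ y, IsBackwardSolution G a b h y := by
  have hint (y : C(Icc a b, E)) :
      IntervalIntegrable (fun s => G s (IccExtend hab y s)) volume a b :=
    intervalIntegrable_comp_of_lipschitzWith hab hG_meas hG_lip hG_int y.continuous.Icc_extend'
  have hsub (t : Icc a b) : uIcc (t : ℝ) b ⊆ uIcc a b :=
    uIcc_subset_uIcc_right (Icc_subset_uIcc t.2)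
  have hcont (y : C(Icc a b, E)) :
      Continuous fun t : Icc a b => h + ∫ s in t..b, G s (IccExtend hab y s) := by
    have hprim := intervalIntegral.continuousOn_primitive_interval_left
      ((intervalIntegrable_iff' (by finiteness)).1 (hint y))
    rw [uIcc_of_le hab] at hprim
    exact continuous_const.add hprim.domRestrict
  let picard (y : C(Icc a b, E)) : C(Icc a b, E) := ⟨_, hcont y⟩
  have hpicard (y z : C(Icc a b, E)) (t : Icc a b) : dist (picard y t) (picard z t) ≤
      K * ∫ s in t..b, dist (IccExtend hab y s) (IccExtend hab z s) := by
    have hdist : Continuous fun s => K * dist (IccExtend hab y s) (IccExtend hab z s) :=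
      continuous_const.mul (y.continuous.Icc_extend'.dist z.continuous.Icc_extend')
    change dist (h + _) (h + _) ≤ _
    rw [dist_add_left, dist_eq_norm, ← intervalIntegral.integral_sub
      ((hint y).mono_set (hsub t)) ((hint z).mono_set (hsub t)),
      ← intervalIntegral.integral_const_mul]
    refine intervalIntegral.norm_integral_le_of_norm_le t.2.2 ?_ (hdist.intervalIntegrable _ _)
    refine Eventually.of_forall fun s hs => ?_
    rw [← dist_eq_norm]
    exact (hG_lip s ⟨t.2.1.trans hs.1.le, hs.2⟩).dist_le_mul _ _
  obtain ⟨y, hy⟩ := exists_isFixedPt_of_dist_le_mul_integral hab hpicard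
  refine ⟨IccExtend hab y, y.continuous.Icc_extend'.continuousOn, hint y, fun t ht => ?_⟩
  rw [IccExtend_of_mem hab _ ht]
  exact (DFunLike.congr_fun hy ⟨t, ht⟩).symm

end Existence

theorem exists_nonpos_forall_Ico_pos {d : ℝ → ℝ} {a b : ℝ} (hab : a ≤ b)
    (hd : ContinuousOn d (Icc a b)) (hdb : d b ≤ 0) :
    ∃ c ∈ Icc a b, d c ≤ 0 ∧ ∀ s ∈ Ico a c, 0 < d s := by
  have hcompact : IsCompact (Icc a b ∩ d ⁻¹' Iic 0) :=
    isCompact_Icc.of_isClosed_subset (hd.preimage_isClosed_of_isClosed isClosed_Icc isClosed_Iic)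
      inter_subset_left
  obtain ⟨c, hc, hleast⟩ := hcompact.exists_isLeast ⟨b, right_mem_Icc.2 hab, hdb⟩
  refine ⟨c, hc.1, hc.2, fun s hs => ?_⟩
  by_contra! hds
  exact hs.2.not_ge (hleast ⟨⟨hs.1, hs.2.le.trans hc.1.2⟩, hds⟩)

namespace IsBackwardSolution

section General

variable {E : Type*} [NormedAddCommGroup E] [NormedSpace ℝ E] {F G : ℝ → E → E} {a b : ℝ} {h : E}
  {y : ℝ → E}

theorem of_hasDerivAt [CompleteSpace E] {f : ℝ → E} (hf : Continuous f)
    (hy : ∀ t, HasDerivAt y (-f t) t) : IsBackwardSolution (fun t _ => f t) a b (y b) y where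
  continuousOn := fun t _ => (hy t).continuousAt.continuousWithinAt
  intervalIntegrable := hf.intervalIntegrable a b
  eq_add_integral t _ := by
    have hftc := intervalIntegral.integral_eq_sub_of_hasDerivAt (fun s _ => hy s)
      (hf.neg.intervalIntegrable t b)
    rw [intervalIntegral.integral_neg] at hftc
    rw [neg_eq_iff_eq_neg.1 hftc]
    abel

theorem congr (hab : a ≤ b) (hy : IsBackwardSolution F a b h y)
    (hFG : ∀ t ∈ Icc a b, F t (y t) = G t (y t)) : IsBackwardSolution G a b h y where
  continuousOn := hy.continuousOn
  intervalIntegrable :=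
    hy.intervalIntegrable.congr fun t ht => hFG t (Ioc_subset_Icc_self (uIoc_of_le hab ▸ ht))
  eq_add_integral t ht := by
    rw [hy.eq_add_integral t ht]
    congr 1
    refine intervalIntegral.integral_congr fun s hs => hFG s ?_
    rw [uIcc_of_le ht.2] at hs
    exact ⟨ht.1.trans hs.1, hs.2⟩

theorem apply_terminal (hy : IsBackwardSolution F a b h y) (hab : a ≤ b) : y b = h := by
  simpa using hy.eq_add_integral b (right_mem_Icc.2 hab)

theorem intervalIntegrable_of_mem (hy : IsBackwardSolution F a b h y) {t c : ℝ}
    (ht : t ∈ Icc a b) (hc : c ∈ Icc a b) :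
    IntervalIntegrable (fun s => F s (y s)) volume t c :=
  hy.intervalIntegrable.mono_set (uIcc_subset_uIcc (Icc_subset_uIcc ht) (Icc_subset_uIcc hc))

theorem sub_eq_integral (hy : IsBackwardSolution F a b h y) {t c : ℝ}
    (ht : t ∈ Icc a b) (hc : c ∈ Icc a b) : y t - y c = ∫ s in t..c, F s (y s) := by
  have hb : b ∈ Icc a b := right_mem_Icc.2 (ht.1.trans ht.2)
  rw [hy.eq_add_integral t ht, hy.eq_add_integral c hc, add_sub_add_left_eq_sub,
    ← intervalIntegral.integral_add_adjacent_intervals (hy.intervalIntegrable_of_mem ht hc)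
      (hy.intervalIntegrable_of_mem hc hb), add_sub_cancel_right]

end General

section Comparison

variable {F F₁ F₂ : ℝ → ℝ → ℝ} {a b h h₁ h₂ : ℝ} {y y₁ y₂ : ℝ → ℝ} {K : ℝ≥0}

theorem max_sub_zero_le_mul_integral (hy₁ : IsBackwardSolution F₁ a b h₁ y₁)
    (hy₂ : IsBackwardSolution F₂ a b h₂ y₂) (hh : h₁ ≤ h₂)
    (hF : ∀ t ∈ Icc a b, y₂ t < y₁ t → F₁ t (y₁ t) - F₂ t (y₂ t) ≤ K * (y₁ t - y₂ t)) :
    ∀ t ∈ Icc a b, max (y₁ t - y₂ t) 0 ≤ K * ∫ s in t..b, max (y₁ s - y₂ s) 0 := by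
  intro t ht
  have hd : ContinuousOn (fun s => y₁ s - y₂ s) (Icc t b) :=
    (hy₁.continuousOn.sub hy₂.continuousOn).mono (Icc_subset_Icc_left ht.1)
  have hu : IntervalIntegrable (fun s => max (y₁ s - y₂ s) 0) volume t b :=
    (hd.sup continuousOn_const).intervalIntegrable_of_Icc ht.2
  have hterminal : y₁ b - y₂ b ≤ 0 := by
    rwa [hy₁.apply_terminal (ht.1.trans ht.2), hy₂.apply_terminal (ht.1.trans ht.2), sub_nonpos]
  obtain ⟨c, hc, hdc, hpos⟩ := exists_nonpos_forall_Ico_pos ht.2 hd hterminal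
  have hcI : c ∈ Icc a b := ⟨ht.1.trans hc.1, hc.2⟩
  have hF₁_int := hy₁.intervalIntegrable_of_mem ht hcI
  have hF₂_int := hy₂.intervalIntegrable_of_mem ht hcI
  have hF_le (s : ℝ) (hs : s ∈ Ioo t c) :
      F₁ s (y₁ s) - F₂ s (y₂ s) ≤ K * max (y₁ s - y₂ s) 0 :=
    (hF s ⟨ht.1.trans hs.1.le, hs.2.le.trans hc.2⟩
      (sub_pos.1 (hpos s (Ioo_subset_Ico_self hs)))).trans
      (mul_le_mul_of_nonneg_left (le_max_left _ _) K.2)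
  refine max_le ?_ (mul_nonneg K.2 (intervalIntegral.integral_nonneg ht.2 fun _ _ =>
    le_max_right _ _))
  calc y₁ t - y₂ t ≤ (y₁ t - y₁ c) - (y₂ t - y₂ c) := by linarith
    _ = ∫ s in t..c, (F₁ s (y₁ s) - F₂ s (y₂ s)) := by
      rw [hy₁.sub_eq_integral ht hcI, hy₂.sub_eq_integral ht hcI,
        intervalIntegral.integral_sub hF₁_int hF₂_int]
    _ ≤ ∫ s in t..c, K * max (y₁ s - y₂ s) 0 :=
      intervalIntegral.integral_mono_on_of_le_Ioo hc.1 (hF₁_int.sub hF₂_int)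
        ((hu.mono_set (uIcc_subset_uIcc_left (Icc_subset_uIcc hc))).const_mul _) hF_le
    _ = K * ∫ s in t..c, max (y₁ s - y₂ s) 0 := intervalIntegral.integral_const_mul _ _
    _ ≤ K * ∫ s in t..b, max (y₁ s - y₂ s) 0 := by
      gcongr
      exact intervalIntegral.integral_mono_interval le_rfl hc.1 hc.2
        (Eventually.of_forall fun _ => le_max_right _ _) hu

theorem le_of_sub_le_mul_sub (hy₁ : IsBackwardSolution F₁ a b h₁ y₁)
    (hy₂ : IsBackwardSolution F₂ a b h₂ y₂) (hh : h₁ ≤ h₂)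
    (hF : ∀ t ∈ Icc a b, y₂ t < y₁ t → F₁ t (y₁ t) - F₂ t (y₂ t) ≤ K * (y₁ t - y₂ t)) :
    ∀ t ∈ Icc a b, y₁ t ≤ y₂ t := by
  have hu : ContinuousOn (fun t => max (y₁ t - y₂ t) 0) (Icc a b) :=
    (hy₁.continuousOn.sub hy₂.continuousOn).sup continuousOn_const
  have hu_nonpos := nonpos_of_le_mul_integral hu (hy₁.max_sub_zero_le_mul_integral hy₂ hh hF)
  exact fun t ht => sub_nonpos.1 ((le_max_left _ _).trans (hu_nonpos t ht))

theorem le_of_generator_le (hy₁ : IsBackwardSolution F₁ a b h₁ y₁)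
    (hy₂ : IsBackwardSolution F₂ a b h₂ y₂) (hh : h₁ ≤ h₂)
    (hF₁ : ∀ t ∈ Icc a b, LipschitzWith K (F₁ t))
    (hF : ∀ t ∈ Icc a b, F₁ t (y₂ t) ≤ F₂ t (y₂ t)) : ∀ t ∈ Icc a b, y₁ t ≤ y₂ t := by
  refine hy₁.le_of_sub_le_mul_sub (K := K) hy₂ hh fun t ht hlt => ?_
  have hlip := (hF₁ t ht).le_add_mul (y₁ t) (y₂ t)
  rw [Real.dist_eq, abs_of_pos (sub_pos.2 hlt)] at hlip
  linarith [hF t ht]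

theorem const_le (hy : IsBackwardSolution F a b h y) (hF : ∀ t ∈ Icc a b, LipschitzWith K (F t))
    {m : ℝ} (hm : m ≤ h) (hFm : ∀ t ∈ Icc a b, 0 ≤ F t m) : ∀ t ∈ Icc a b, m ≤ y t := by
  have hconst : IsBackwardSolution (fun _ _ => 0) a b m fun _ => m :=
    of_hasDerivAt (y := fun _ => m) continuous_const fun t => by simpa using hasDerivAt_const t m
  refine hconst.le_of_sub_le_mul_sub (K := K) hy hm fun t ht hlt => ?_
  have hlip := (hF t ht).le_add_mul m (y t)
  rw [Real.dist_eq, abs_of_pos (sub_pos.2 hlt)] at hlip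
  linarith [hFm t ht]

theorem le_const (hy : IsBackwardSolution F a b h y) (hF : ∀ t ∈ Icc a b, LipschitzWith K (F t))
    (hK : K ≠ 0) {ε M : ℝ} (hε : 0 ≤ ε) (hFM : ∀ t ∈ Icc a b, F t M ≤ ε)
    (hh : h ≤ M - ε * (Real.exp (K * (b - a)) - 1) / K) : ∀ t ∈ Icc a b, y t ≤ M := by
  have hK' : (K : ℝ) ≠ 0 := NNReal.coe_ne_zero.2 hK
  let w (t : ℝ) : ℝ := M - ε * (Real.exp (K * (t - a)) - 1) / K
  have hw_le (t : ℝ) (ht : t ∈ Icc a b) : w t ≤ M := by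
    have hexp : 1 ≤ Real.exp (K * (t - a)) :=
      Real.one_le_exp (mul_nonneg K.2 (sub_nonneg.2 ht.1))
    exact sub_le_self M (div_nonneg (mul_nonneg hε (sub_nonneg.2 hexp)) K.2)
  have hw_deriv (t : ℝ) : HasDerivAt w (-(ε + K * (M - w t))) t := by
    have hexp : HasDerivAt (fun t => Real.exp (K * (t - a))) (Real.exp (K * (t - a)) * (K * 1)) t :=
      (((hasDerivAt_id t).sub_const a).const_mul (K : ℝ)).exp
    refine ((((hexp.sub_const 1).const_mul ε).div_const (K : ℝ)).const_sub M).congr_deriv ?_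
    simp only [w]
    field_simp
    ring
  have hw_sol : IsBackwardSolution (fun t _ => ε + K * (M - w t)) a b (w b) w :=
    of_hasDerivAt (by fun_prop) hw_deriv
  have hy_le : ∀ t ∈ Icc a b, y t ≤ w t := by
    refine hy.le_of_generator_le hw_sol hh hF fun t ht => ?_
    have hlip := (hF t ht).le_add_mul (w t) M
    rw [dist_comm, Real.dist_eq, abs_of_nonneg (sub_nonneg.2 (hw_le t ht))] at hlip
    linarith [hFM t ht]
  exact fun t ht => (hy_le t ht).trans (hw_le t ht)

end Comparison

end IsBackwardSolution

section Truncation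

variable {m M : ℝ}

/-- The generator that agrees with `F` for states in `[m, M]` and evaluates `F` at the nearest
endpoint otherwise. It turns a generator Lipschitz on `[m, M]` into a globally Lipschitz one. -/
noncomputable def truncate (hmM : m ≤ M) (F : ℝ → ℝ → ℝ) (t x : ℝ) : ℝ :=
  F t (projIcc m M hmM x)

variable {F : ℝ → ℝ → ℝ} {K : ℝ≥0}

theorem truncate_of_mem (hmM : m ≤ M) (t : ℝ) {x : ℝ} (hx : x ∈ Icc m M) :
    truncate hmM F t x = F t x := by
  rw [truncate, projIcc_of_mem hmM hx]

theorem lipschitzWith_truncate (hmM : m ≤ M) {t : ℝ} (hF : LipschitzOnWith K (F t) (Icc m M)) :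
    LipschitzWith K (truncate hmM F t) :=
  mul_one K ▸ hF.to_restrict.comp (LipschitzWith.projIcc hmM)

theorem exists_isBackwardSolution_truncate (hmM : m ≤ M) {a b C : ℝ} (hab : a ≤ b)
    (hF_meas : ∀ x, Measurable fun t => F t x)
    (hF_lip : ∀ t ∈ Icc a b, LipschitzOnWith K (F t) (Icc m M))
    (hF_bdd : ∀ t ∈ Icc a b, ∀ x ∈ Icc m M, |F t x| ≤ C) (h : ℝ) :
    ∃ y, IsBackwardSolution (truncate hmM F) a b h y := by
  have hmeas (x : ℝ) : StronglyMeasurable fun t => truncate hmM F t x :=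
    (hF_meas _).stronglyMeasurable
  refine exists_isBackwardSolution hab hmeas
    (fun t ht => lipschitzWith_truncate hmM (hF_lip t ht)) ?_ h
  refine (intervalIntegrable_const (c := C)).mono_fun' (hmeas 0).aestronglyMeasurable ?_
  filter_upwards [ae_restrict_mem measurableSet_uIoc] with t ht
  rw [uIoc_of_le hab] at ht
  exact hF_bdd t (Ioc_subset_Icc_self ht) _ (projIcc m M hmM 0).2

theorem IsBackwardSolution.of_truncate {hmM : m ≤ M} {a b h : ℝ} {y : ℝ → ℝ} (hab : a ≤ b)
    (hy : IsBackwardSolution (truncate hmM F) a b h y) (hmem : ∀ t ∈ Icc a b, y t ∈ Icc m M) :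
    IsBackwardSolution F a b h y :=
  hy.congr hab fun t ht => truncate_of_mem hmM t (hmem t ht)

end Truncation

/-- Bounded solutions of the dominating ODEs in the case `σ₃ ≤ c₁`,
`0 ≤ h ≤ c₂`, `f₁ ≥ 0` (Theorem 5.9, case (5.25)). -/
theorem stmt11
    (T c2 c3 L : ℝ) (hT : 0 < T) (hc2 : 0 < c2) (hc23 : c2 < c3) (hL : 0 < L)
    (Fl Fu : ℝ → ℝ → ℝ)
    (hle : ∀ t ∈ Icc (0:ℝ) T, ∀ y : ℝ, Fl t y ≤ Fu t y)
    (hmeasu : ∀ y : ℝ, Measurable fun t => Fu t y)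
    (hmeasl : ∀ y : ℝ, Measurable fun t => Fl t y)
    (hLipu : ∀ t ∈ Icc (0:ℝ) T,
      LipschitzOnWith (Real.toNNReal L) (fun y => Fu t y) (Icc 0 c3))
    (hLipl : ∀ t ∈ Icc (0:ℝ) T,
      LipschitzOnWith (Real.toNNReal L) (fun y => Fl t y) (Icc 0 c3))
    (hbdd : ∃ K : ℝ, ∀ t ∈ Icc (0:ℝ) T, ∀ y ∈ Icc (0:ℝ) c3,
      |Fu t y| + |Fl t y| ≤ K)
    (hl hu : ℝ) (hlu : hl ≤ hu) (hhl : 0 ≤ hl) (hhu : hu ≤ c2)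
    (hFl0 : ∀ t ∈ Icc (0:ℝ) T, 0 ≤ Fl t 0)
    (ε : ℝ) (hε : 0 < ε)
    (hFu : ∀ t ∈ Icc (0:ℝ) T, Fu t c3 ≤ ε)
    (hεsmall : ε * (Real.exp (L * T) - 1) / L ≤ c3 - c2) :
    ∃ yu yl : ℝ → ℝ,
      ContinuousOn yu (Icc 0 T) ∧ ContinuousOn yl (Icc 0 T) ∧
      (∀ t ∈ Icc (0:ℝ) T, yu t = hu + ∫ s in t..T, Fu s (yu s)) ∧
      (∀ t ∈ Icc (0:ℝ) T, yl t = hl + ∫ s in t..T, Fl s (yl s)) ∧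
      (∀ t ∈ Icc (0:ℝ) T, 0 ≤ yl t ∧ yl t ≤ yu t ∧ yu t ≤ c3) := by
  lift L to ℝ≥0 using hL.le
  rw [Real.toNNReal_coe] at hLipu hLipl
  obtain ⟨C, hC⟩ := hbdd
  have hc3 : 0 ≤ c3 := (hc2.trans hc23).le
  obtain ⟨yu, hyu⟩ := exists_isBackwardSolution_truncate hc3 hT.le hmeasu hLipu
    (fun t ht x hx => (le_add_of_nonneg_right (abs_nonneg _)).trans (hC t ht x hx)) hu
  obtain ⟨yl, hyl⟩ := exists_isBackwardSolution_truncate hc3 hT.le hmeasl hLipl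
    (fun t ht x hx => (le_add_of_nonneg_left (abs_nonneg _)).trans (hC t ht x hx)) hl
  have hLipu' := fun t ht => lipschitzWith_truncate hc3 (hLipu t ht)
  have hLipl' := fun t ht => lipschitzWith_truncate hc3 (hLipl t ht)
  have hnonneg : ∀ t ∈ Icc 0 T, 0 ≤ yl t := hyl.const_le hLipl' hhl fun t ht => by
    simpa only [truncate_of_mem hc3 t (left_mem_Icc.2 hc3)] using hFl0 t ht
  have hyl_le : ∀ t ∈ Icc 0 T, yl t ≤ yu t :=
    hyl.le_of_generator_le hyu hlu hLipl' fun t ht => hle t ht _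
  have hyu_le : ∀ t ∈ Icc 0 T, yu t ≤ c3 := by
    refine hyu.le_const hLipu' (by simpa using hL.ne') hε.le (fun t ht => ?_) ?_
    · simpa only [truncate_of_mem hc3 t (right_mem_Icc.2 hc3)] using hFu t ht
    · rw [sub_zero]
      linarith
  have hyu' := hyu.of_truncate hT.le fun t ht =>
    ⟨(hnonneg t ht).trans (hyl_le t ht), hyu_le t ht⟩
  have hyl' := hyl.of_truncate hT.le fun t ht =>
    ⟨hnonneg t ht, (hyl_le t ht).trans (hyu_le t ht)⟩
  exact ⟨yu, yl, hyu'.continuousOn, hyl'.continuousOn, hyu'.eq_add_integral,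
    hyl'.eq_add_integral, fun t ht => ⟨hnonneg t ht, hyl_le t ht, hyu_le t ht⟩⟩
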